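/- Let β = (β_1,…,β_t) ∈ Z^t with β_1+⋯+β_t ≥ 0, and let D be a sum of n ≥ 2g + 2(β_1+⋯+β_t) + 2 pairwise distinct rational places avoiding P, Q_1,…,Q_t. Let a_1 < ⋯ < a_n be the elements of Ĥ*_β and a_0 = a_1 − 1. Then there exists x ∈ (F_q^*)^n such that the flag {0} = C_L(D, a_0P+G_β) ⊊ C_L(D, a_1P+G_β) ⊊ ⋯ ⊊ C_L(D, a_nP+G_β) = F_q^n is x-isometry-dual if and only if the divisor E = (n+2g−2−2(β_1+⋯+β_t))P + 2G_β − D is a canonical divisor of F. -/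

import Mathlib

/-!
The theorem compares the flag of codes with the duality of evaluation codes, which is derived here
from the Riemann-Roch theorem alone.

**Duality.** Let `W` be a divisor of degree `2g - 2` with `ℓ(W) = g`; it can replace the given
canonical divisor in the Riemann-Roch theorem (`IsCanonical.RRFor`). The code of `W + D` is a
hyperplane, and its normal vector `y` has no zero coordinate because `L(W + P_j) = L(W)`
(`exists_residue_vector`). Since `L(A) · L(W + D - A) ⊆ L(W + D)`, a dimension count shows that the
code of `W + D - A` is the orthogonal of the code of `A` for the inner product weighted by `y`
(`range_evL_eq_orthogonal`). As `W` may have some `P_j` in its support, functions are multiplied by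
a local factor `τ_j` of the right valuation before they are evaluated at `P_j`.

**If `E` is canonical**, duality with `W = E` exchanges the codes at `q` and at `N - q`, where `N` is
the coefficient of `P`. The code at `a_i` has dimension `i` (`finrank_flag`) and the codes form a
chain, so the orthogonal of the code at `a_{n-k}` is the one at `a_k` (`flag_dual_of_canonical`).

**If the flag is isometry-dual**, put `A_k = a_k P + G` and `B_k = K + D - A_{n-k}` for the given
canonical divisor `K`. Comparing the hypothesis with duality for `K`, every `w ∈ L(B_k)` has a
partner `f ∈ L(A_k)` whose evaluation is that of `w` multiplied by a fixed nowhere zero vector. For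
two such pairs, `w' f - w f'` vanishes on `D`, so it lies in `L(K + (k + l - n)P)`. This space is
zero for `k = l = 1`, which yields `f = θ w` for all pairs at level `1`. The equation passes from
level `k` to level `k + 1 ≤ g + 1` with the same `θ`: if `f ≠ θ w`, multiplication by `f - θ w` embeds
`L(B_k)`, of dimension at least `k`, into `L(K + (2k + 1 - n)P)`, of dimension less than `k` by
Clifford's inequality (`ell_Kdiv_add_single_lt`). The latter rests on
`ℓ(A) + ℓ(B) ≤ ℓ(A + B) + 1` (`ell_add_ell_le`), obtained from the valuations at `P` and the
Cauchy-Davenport bound for sets of integers. Finally `B_{g+1}` has degree `2g` and `ℓ ≥ g + 1`, so it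
is base point free, and `θ L(B_{g+1}) ⊆ L(A_{g+1})` gives `θ L(K) ⊆ L(E)`. Hence `ℓ(E) ≥ g`, which
makes `E` canonical (`canonical_of_flag_dual`).
-/

open scoped BigOperators Classical

noncomputable section

namespace AGCodes

/-- An algebraic function field `F` of one variable over the finite field `Fq`,
presented together with its set of places, discrete valuations, degrees of places,
genus, Riemann-Roch spaces, a canonical divisor, evaluation (residue) maps at
rational places, and the basic axioms these satisfy (including the Riemann-Roch
theorem). Divisors are finitely supported `ℤ`-valued functions on places. -/
structure Data (Fq F Place : Type*) [Field Fq] [Fintype Fq] [Field F] [Algebra Fq F] where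
  /-- the (normalized, additive) discrete valuation at each place; by convention `v P 0 = 0` -/
  v : Place → F → ℤ
  /-- the degree of a place -/
  degP : Place → ℕ
  /-- the genus of the function field -/
  genus : ℕ
  /-- the Riemann-Roch space `L(D)` of a divisor `D` -/
  RR : (Place →₀ ℤ) → Submodule Fq F
  /-- evaluation (residue) of a function at a place; meaningful at rational places
  for functions with no pole there -/
  ev : Place → F → Fq
  /-- a fixed canonical divisor -/
  Kdiv : Place →₀ ℤ
  degP_pos : ∀ P, 0 < degP P
  v_zero : ∀ P, v P 0 = 0
  v_mul : ∀ P (f g : F), f ≠ 0 → g ≠ 0 → v P (f * g) = v P f + v P g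
  v_add : ∀ P (f g : F), f ≠ 0 → g ≠ 0 → f + g ≠ 0 → min (v P f) (v P g) ≤ v P (f + g)
  v_algebraMap : ∀ P (c : Fq), c ≠ 0 → v P (algebraMap Fq F c) = 0
  v_exists_uniformizer : ∀ P : Place, ∃ f : F, f ≠ 0 ∧ v P f = 1
  v_support_finite : ∀ f : F, f ≠ 0 → {P : Place | v P f ≠ 0}.Finite
  /-- `Fq` is the full constant field: functions with no poles are constants -/
  const_of_no_poles : ∀ f : F, f ≠ 0 → (∀ P, 0 ≤ v P f) → ∃ c : Fq, f = algebraMap Fq F c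
  /-- principal divisors have degree zero -/
  deg_principal : ∀ f : F, f ≠ 0 → ∑ᶠ P : Place, v P f * degP P = 0
  mem_RR : ∀ (D : Place →₀ ℤ) (f : F), f ∈ RR D ↔ f = 0 ∨ ∀ P, 0 ≤ v P f + D P
  rr_findim : ∀ D : Place →₀ ℤ, FiniteDimensional Fq (RR D)
  /-- the Riemann-Roch theorem -/
  riemann_roch : ∀ D : Place →₀ ℤ,
    (Module.finrank Fq (RR D) : ℤ)
      = (D.sum fun P k => k * degP P) + 1 - genus
        + Module.finrank Fq (RR (Kdiv - D))
  ev_algebraMap : ∀ (P : Place) (c : Fq), ev P (algebraMap Fq F c) = c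
  ev_add : ∀ (P : Place) (f g : F), degP P = 1 →
    (f = 0 ∨ 0 ≤ v P f) → (g = 0 ∨ 0 ≤ v P g) → ev P (f + g) = ev P f + ev P g
  ev_mul : ∀ (P : Place) (f g : F), degP P = 1 →
    (f = 0 ∨ 0 ≤ v P f) → (g = 0 ∨ 0 ≤ v P g) → ev P (f * g) = ev P f * ev P g
  ev_eq_zero_iff : ∀ (P : Place) (f : F), degP P = 1 → f ≠ 0 → 0 ≤ v P f →
    (ev P f = 0 ↔ 1 ≤ v P f)

variable {Fq F Place : Type*} [Field Fq] [Fintype Fq] [Field F] [Algebra Fq F]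

/-- The divisor `β₁Q₁ + ⋯ + β_tQ_t`. -/
def Gdiv {t : ℕ} (Q : Fin t → Place) (β : Fin t → ℤ) : Place →₀ ℤ :=
  ∑ i, Finsupp.single (Q i) (β i)

/-- The divisor `P₁ + ⋯ + P_n` attached to a tuple of places. -/
def Ddiv {n : ℕ} (PP : Fin n → Place) : Place →₀ ℤ :=
  ∑ j, Finsupp.single (PP j) 1

namespace Data

variable (X : Data Fq F Place)

/-- The degree of a divisor. -/
def divDeg (D : Place →₀ ℤ) : ℤ := D.sum fun P k => k * X.degP P

/-- `ℓ(D)`, the dimension of the Riemann-Roch space of `D`. -/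
def ell (D : Place →₀ ℤ) : ℕ := Module.finrank Fq (X.RR D)

/-- A place is rational if it has degree one. -/
def IsRational (P : Place) : Prop := X.degP P = 1

/-- A divisor is canonical iff it has degree `2g-2` and `ℓ = g`. -/
def IsCanonical (W : Place →₀ ℤ) : Prop :=
  X.divDeg W = 2 * (X.genus : ℤ) - 2 ∧ X.ell W = X.genus

/-- The generalized Weierstrass semigroup `Ĥ(Q₁,…,Q_t)`: vectors
`(-v_{Q₁}(h),…,-v_{Q_t}(h))` for `h ≠ 0` regular outside `{Q₁,…,Q_t}`. -/
def Hhat {t : ℕ} (Q : Fin t → Place) : Set (Fin t → ℤ) :=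
  {α | ∃ h : F, h ≠ 0 ∧ (∀ P : Place, (∀ i, P ≠ Q i) → 0 ≤ X.v P h) ∧
    ∀ i, α i = - X.v (Q i) h}

/-- The classical Weierstrass semigroup `H(P) = {a ∈ ℕ : ∃ z, (z)_∞ = aP}`
(viewed inside `ℤ`). -/
def Hone (P : Place) : Set ℤ :=
  {a | 0 ≤ a ∧ ∃ h : F, h ≠ 0 ∧ (∀ R : Place, R ≠ P → 0 ≤ X.v R h) ∧ X.v P h = -a}

/-- `Ĥ_β = {a ∈ ℤ : ℓ(aP + G_β) ≠ ℓ((a-1)P + G_β)}`. -/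
def HhatB (P : Place) {t : ℕ} (Q : Fin t → Place) (β : Fin t → ℤ) : Set ℤ :=
  {a | X.ell (Finsupp.single P a + Gdiv Q β) ≠ X.ell (Finsupp.single P (a-1) + Gdiv Q β)}

/-- The algebraic geometry (evaluation) code `C_L(D, G)` attached to the tuple of
places `PP` (determining `D = P₁ + ⋯ + P_n`) and the divisor `G`. -/
def code {n : ℕ} (PP : Fin n → Place) (G : Place →₀ ℤ) : Set (Fin n → Fq) :=
  {w | ∃ z ∈ X.RR G, ∀ i, w i = X.ev (PP i) z}

/-- The dimension of the code `C_L(D, G)`. -/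
def codeDim {n : ℕ} (PP : Fin n → Place) (G : Place →₀ ℤ) : ℕ :=
  Module.finrank Fq (Submodule.span Fq (X.code PP G))

/-- `Ĥ*_β = {a ∈ ℤ : C_L(D, aP+G_β) ≠ C_L(D, (a-1)P+G_β)}`. -/
def HhatS {n : ℕ} (PP : Fin n → Place) (P : Place) {t : ℕ} (Q : Fin t → Place)
    (β : Fin t → ℤ) : Set ℤ :=
  {a | X.code PP (Finsupp.single P a + Gdiv Q β)
      ≠ X.code PP (Finsupp.single P (a-1) + Gdiv Q β)}

end Data

/-- The dual code with respect to the standard inner product. -/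
def dualCode {n : ℕ} (C : Set (Fin n → Fq)) : Set (Fin n → Fq) :=
  {y | ∀ c ∈ C, ∑ i, y i * c i = 0}

/-- The isometric code `x · C = {(x₁c₁,…,x_nc_n) : c ∈ C}`. -/
def scaleCode {n : ℕ} (x : Fin n → Fq) (C : Set (Fin n → Fq)) : Set (Fin n → Fq) :=
  (fun c => fun i => x i * c i) '' C

/-- A flag of codes `C₀, C₁, …, C_s` is `x`-isometry-dual if `x` has all coordinates
nonzero and `C_i = x · C_{s-i}^⊥` for all `i`. -/
def IsIsometryDualFlag {n s : ℕ} (C : Fin (s+1) → Set (Fin n → Fq))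
    (x : Fin n → Fq) : Prop :=
  (∀ i, x i ≠ 0) ∧ ∀ i, C i = scaleCode x (dualCode (C (Fin.rev i)))

end AGCodes

open AGCodes


namespace AGCodes.Data

variable {Fq F Place : Type*} [Field Fq] [Fintype Fq] [Field F] [Algebra Fq F]
variable (X : Data Fq F Place)

/-! ### Divisors, degrees and Riemann-Roch spaces -/

lemma divDeg_add (A B : Place →₀ ℤ) : X.divDeg (A + B) = X.divDeg A + X.divDeg B := by
  unfold divDeg
  exact Finsupp.sum_add_index' (by simp) (by intros; ring)

lemma divDeg_zero : X.divDeg 0 = 0 := by simp [divDeg]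

lemma divDeg_neg (A : Place →₀ ℤ) : X.divDeg (-A) = -X.divDeg A := by
  have := X.divDeg_add A (-A)
  rw [add_neg_cancel, divDeg_zero] at this
  linarith

lemma divDeg_sub (A B : Place →₀ ℤ) : X.divDeg (A - B) = X.divDeg A - X.divDeg B := by
  rw [sub_eq_add_neg, divDeg_add, divDeg_neg, sub_eq_add_neg]

lemma divDeg_single (P : Place) (k : ℤ) : X.divDeg (Finsupp.single P k) = k * X.degP P := by
  simp [divDeg]

lemma divDeg_sum {ι : Type*} (s : Finset ι) (f : ι → Place →₀ ℤ) :
    X.divDeg (∑ i ∈ s, f i) = ∑ i ∈ s, X.divDeg (f i) := by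
  induction s using Finset.induction_on with
  | empty => simp [divDeg_zero]
  | insert a s ha ih => rw [Finset.sum_insert ha, Finset.sum_insert ha, divDeg_add, ih]

lemma divDeg_Gdiv {t : ℕ} {Q : Fin t → Place} (hQ : ∀ i, X.IsRational (Q i)) (β : Fin t → ℤ) :
    X.divDeg (Gdiv Q β) = ∑ i, β i := by
  unfold Gdiv
  rw [divDeg_sum]
  refine Finset.sum_congr rfl fun i _ => ?_
  have h : X.degP (Q i) = 1 := hQ i
  rw [divDeg_single, h]; simp

lemma divDeg_Ddiv {n : ℕ} {PP : Fin n → Place} (hPP : ∀ i, X.IsRational (PP i)) :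
    X.divDeg (Ddiv PP) = n := by
  unfold Ddiv
  rw [divDeg_sum]
  have : ∀ i ∈ Finset.univ, X.divDeg (Finsupp.single (PP i) (1 : ℤ)) = 1 := by
    intro i _
    have h : X.degP (PP i) = 1 := hPP i
    rw [divDeg_single, h]; simp
  rw [Finset.sum_congr rfl this]; simp

lemma Ddiv_apply_self {n : ℕ} {PP : Fin n → Place} (hinj : Function.Injective PP) (j : Fin n) :
    Ddiv PP (PP j) = 1 := by
  unfold Ddiv
  rw [Finsupp.finsetSum_apply, Finset.sum_eq_single j]
  · simp
  · intro i _ hij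
    exact Finsupp.single_eq_of_ne (fun h => hij (hinj h).symm)
  · simp

lemma Ddiv_apply_of_ne {n : ℕ} {PP : Fin n → Place} {T : Place} (h : ∀ j, PP j ≠ T) :
    Ddiv PP T = 0 := by
  unfold Ddiv
  rw [Finsupp.finsetSum_apply]
  exact Finset.sum_eq_zero fun j _ => Finsupp.single_eq_of_ne (h j).symm

lemma Gdiv_apply_of_ne {t : ℕ} {Q : Fin t → Place} {β : Fin t → ℤ} {T : Place}
    (h : ∀ i, T ≠ Q i) : Gdiv Q β T = 0 := by
  unfold Gdiv
  rw [Finsupp.finsetSum_apply]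
  exact Finset.sum_eq_zero fun j _ => Finsupp.single_eq_of_ne (h j)

lemma v_one (T : Place) : X.v T 1 = 0 := by
  have := X.v_algebraMap T 1 one_ne_zero
  simpa using this

lemma v_inv (T : Place) {f : F} (hf : f ≠ 0) : X.v T f⁻¹ = -X.v T f := by
  have := X.v_mul T f f⁻¹ hf (inv_ne_zero hf)
  rw [mul_inv_cancel₀ hf, v_one] at this
  linarith

/-- The valuation at a place takes every integer value. -/
lemma exists_v_eq (T : Place) (m : ℤ) : ∃ f : F, f ≠ 0 ∧ X.v T f = m := by
  obtain ⟨t, ht, hv⟩ := X.v_exists_uniformizer T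
  induction m using Int.induction_on with
  | zero => exact ⟨1, one_ne_zero, X.v_one T⟩
  | succ i ih =>
    obtain ⟨f, hf, hfv⟩ := ih
    exact ⟨f * t, mul_ne_zero hf ht, by rw [X.v_mul T f t hf ht, hfv, hv]⟩
  | pred i ih =>
    obtain ⟨f, hf, hfv⟩ := ih
    refine ⟨f * t⁻¹, mul_ne_zero hf (inv_ne_zero ht), ?_⟩
    rw [X.v_mul T f _ hf (inv_ne_zero ht), X.v_inv T ht, hfv, hv]; ring

lemma mem_RR_ne {D : Place →₀ ℤ} {f : F} (hf : f ≠ 0) :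
    f ∈ X.RR D ↔ ∀ T, 0 ≤ X.v T f + D T := by
  rw [X.mem_RR]; simp [hf]

lemma RR_mono {A B : Place →₀ ℤ} (h : A ≤ B) : X.RR A ≤ X.RR B := by
  intro f hf
  by_cases h0 : f = 0
  · rw [h0]; exact zero_mem _
  rw [X.mem_RR_ne h0] at hf ⊢
  intro T
  have := hf T
  have := h T
  linarith

lemma mul_mem_RR {A B : Place →₀ ℤ} {f h : F} (hf : f ∈ X.RR A) (hh : h ∈ X.RR B) :
    f * h ∈ X.RR (A + B) := by
  by_cases h0 : f = 0
  · rw [h0, zero_mul]; exact zero_mem _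
  by_cases h1 : h = 0
  · rw [h1, mul_zero]; exact zero_mem _
  rw [X.mem_RR_ne h0] at hf
  rw [X.mem_RR_ne h1] at hh
  rw [X.mem_RR_ne (mul_ne_zero h0 h1)]
  intro T
  have := hf T
  have := hh T
  rw [X.v_mul T f h h0 h1, Finsupp.add_apply]
  linarith

lemma ell_le_of_RR_le {A B : Place →₀ ℤ} (h : X.RR A ≤ X.RR B) : X.ell A ≤ X.ell B := by
  have := X.rr_findim B
  exact Submodule.finrank_mono h

lemma ell_mono {A B : Place →₀ ℤ} (h : A ≤ B) : X.ell A ≤ X.ell B :=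
  X.ell_le_of_RR_le (X.RR_mono h)

/-- Multiplication by a nonzero function embeds Riemann-Roch spaces in one another. -/
lemma ell_le_of_mul {A B : Place →₀ ℤ} {f : F} (hf : f ≠ 0)
    (h : ∀ z ∈ X.RR A, f * z ∈ X.RR B) : X.ell A ≤ X.ell B := by
  have := X.rr_findim B
  let φ : X.RR A →ₗ[Fq] X.RR B :=
    ((LinearMap.mulLeft Fq f).comp (X.RR A).subtype).codRestrict (X.RR B) (fun z => h z z.2)
  refine LinearMap.finrank_le_finrank_of_injective (f := φ) ?_
  intro z w hzw
  have : f * (z : F) = f * (w : F) := congrArg Subtype.val hzw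
  exact Subtype.ext (mul_left_cancel₀ hf this)

lemma mul_mem_RR_of_divisor_le {A B : Place →₀ ℤ} {f : F} (hf : f ≠ 0)
    (h : ∀ T, 0 ≤ X.v T f + B T - A T) : ∀ z ∈ X.RR A, f * z ∈ X.RR B := by
  intro z hz
  have hfm : f ∈ X.RR (B - A) := by
    rw [X.mem_RR_ne hf]
    intro T
    have := h T
    rw [Finsupp.sub_apply]; linarith
  have := X.mul_mem_RR hfm hz
  rwa [sub_add_cancel] at this

/-- For `f ≠ 0`, the divisor `B = (f) + A` has degree `deg A`, principal divisors having degree `0`. -/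
lemma divDeg_eq_sum {A : Place →₀ ℤ} {f : F} (hf : f ≠ 0) :
    ∃ B : Place →₀ ℤ, (∀ T, B T = X.v T f + A T) ∧ X.divDeg B = X.divDeg A := by
  have hfin := X.v_support_finite f hf
  let V : Place →₀ ℤ := Finsupp.onFinset hfin.toFinset (fun T => X.v T f) (by
    intro T hT; simpa using hT)
  have hV : ∀ T, V T = X.v T f := fun T => rfl
  refine ⟨V + A, fun T => by rw [Finsupp.add_apply, hV], ?_⟩
  have h0 : X.divDeg V = 0 := by
    rw [← X.deg_principal f hf]
    unfold divDeg Finsupp.sum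
    rw [finsum_eq_sum_of_support_subset (s := V.support)]
    · rfl
    · intro T hT
      simp only [Function.mem_support, ne_eq, mul_eq_zero, not_or] at hT
      simpa [hV] using hT.1
  rw [divDeg_add, h0, zero_add]

lemma divDeg_nonneg {A : Place →₀ ℤ} (h : ∀ T, 0 ≤ A T) : 0 ≤ X.divDeg A :=
  Finset.sum_nonneg fun T _ => mul_nonneg (h T) (by positivity)

lemma eq_zero_of_divDeg_neg {A : Place →₀ ℤ} (h : X.divDeg A < 0) {f : F} (hf : f ∈ X.RR A) :
    f = 0 := by
  by_contra h0
  obtain ⟨B, hB, hd⟩ := X.divDeg_eq_sum (A := A) h0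
  rw [X.mem_RR_ne h0] at hf
  have := X.divDeg_nonneg (A := B) (fun T => by rw [hB]; exact hf T)
  linarith

lemma ell_eq_zero {A : Place →₀ ℤ} (h : X.divDeg A < 0) : X.ell A = 0 := by
  have : X.RR A = ⊥ := by
    rw [eq_bot_iff]
    intro f hf
    exact (Submodule.mem_bot _).2 (X.eq_zero_of_divDeg_neg h hf)
  unfold ell
  rw [this]; simp

lemma exists_ne_zero_of_ell_pos {A : Place →₀ ℤ} (h : 0 < X.ell A) : ∃ f ∈ X.RR A, f ≠ 0 := by
  by_contra hcon
  push Not at hcon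
  have : X.RR A = ⊥ := by
    rw [eq_bot_iff]
    intro f hf
    exact (Submodule.mem_bot _).2 (hcon f hf)
  unfold ell at h
  rw [this] at h
  simp at h

lemma ell_pos_of_mem {A : Place →₀ ℤ} {f : F} (hf : f ∈ X.RR A) (h0 : f ≠ 0) : 0 < X.ell A := by
  have := X.rr_findim A
  have : Nontrivial (X.RR A) := ⟨⟨⟨f, hf⟩, 0, fun h => h0 (congrArg Subtype.val h)⟩⟩
  exact Module.finrank_pos

lemma one_mem_RR {A : Place →₀ ℤ} (h : ∀ T, 0 ≤ A T) : (1 : F) ∈ X.RR A := by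
  rw [X.mem_RR_ne one_ne_zero]
  intro T
  rw [v_one, zero_add]; exact h T

lemma ell_zero : X.ell 0 = 1 := by
  have h1 : (1 : F) ∈ X.RR 0 := X.one_mem_RR (fun T => le_rfl)
  refine (finrank_eq_one_iff_of_nonzero' (⟨1, h1⟩ : X.RR 0) ?_).2 ?_
  · intro h; exact one_ne_zero (congrArg Subtype.val h)
  · rintro ⟨w, hw⟩
    by_cases h0 : w = 0
    · exact ⟨0, by ext; simp [h0]⟩
    rw [X.mem_RR_ne h0] at hw
    obtain ⟨c, hc⟩ := X.const_of_no_poles w h0 (fun T => by simpa using hw T)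
    exact ⟨c, by ext; simp [hc, Algebra.smul_def]⟩

/-- The divisor `W` may play the role of the canonical divisor in the Riemann-Roch theorem. -/
def RRFor (W : Place →₀ ℤ) : Prop :=
  ∀ A : Place →₀ ℤ, (X.ell A : ℤ) = X.divDeg A + 1 - X.genus + X.ell (W - A)

lemma RRFor_Kdiv : X.RRFor X.Kdiv := fun A => X.riemann_roch A

variable {X}

lemma RRFor.ell_eq {W : Place →₀ ℤ} (h : X.RRFor W) : X.ell W = X.genus := by
  have := h 0
  rw [sub_zero, ell_zero, divDeg_zero] at this
  push_cast at this
  omega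

lemma RRFor.divDeg_eq {W : Place →₀ ℤ} (h : X.RRFor W) : X.divDeg W = 2 * X.genus - 2 := by
  have := h W
  rw [sub_self, ell_zero, h.ell_eq] at this
  push_cast at this
  omega

variable (X)

lemma ell_of_large {A : Place →₀ ℤ} (h : 2 * (X.genus : ℤ) - 1 ≤ X.divDeg A) :
    (X.ell A : ℤ) = X.divDeg A + 1 - X.genus := by
  have h1 := X.RRFor_Kdiv A
  rw [X.ell_eq_zero (A := X.Kdiv - A)
    (by rw [divDeg_sub, X.RRFor_Kdiv.divDeg_eq]; linarith)] at h1
  simpa using h1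

lemma ell_ge (A : Place →₀ ℤ) : X.divDeg A + 1 - X.genus ≤ X.ell A := by
  have h1 := X.RRFor_Kdiv A
  omega

lemma divDeg_single_rat {P : Place} (hP : X.IsRational P) (m : ℤ) :
    X.divDeg (Finsupp.single P m) = m := by
  have h : X.degP P = 1 := hP
  rw [divDeg_single, h]; simp

lemma single_nonneg' (P : Place) {m : ℤ} (hm : 0 ≤ m) (T : Place) :
    0 ≤ Finsupp.single P m T := by
  rw [Finsupp.single_apply]; split_ifs <;> simp [hm]

lemma ell_le_of_divDeg_le {P : Place} (hP : X.IsRational P) {A : Place →₀ ℤ}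
    (h : X.divDeg A ≤ 2 * (X.genus : ℤ) - 1) : X.ell A ≤ X.genus := by
  have h1 : X.ell A ≤ X.ell (A + Finsupp.single P (2 * (X.genus : ℤ) - 1 - X.divDeg A)) := by
    apply X.ell_mono
    intro T
    have := single_nonneg' P (m := 2 * (X.genus : ℤ) - 1 - X.divDeg A) (by linarith) T
    rw [Finsupp.add_apply]; linarith
  have hd : X.divDeg (A + Finsupp.single P (2 * (X.genus : ℤ) - 1 - X.divDeg A))
      = 2 * (X.genus : ℤ) - 1 := by
    rw [divDeg_add, X.divDeg_single_rat hP]; ring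
  have h2 := X.ell_of_large (hd.ge)
  rw [hd] at h2
  omega

/-- Removing a rational place lowers `ℓ` by at most one. -/
lemma ell_le_sub_single_add_one {P : Place} (hP : X.IsRational P) (A : Place →₀ ℤ) :
    X.ell A ≤ X.ell (A - Finsupp.single P 1) + 1 := by
  have h1 := X.RRFor_Kdiv A
  have h2 := X.RRFor_Kdiv (A - Finsupp.single P 1)
  rw [divDeg_sub, X.divDeg_single_rat hP] at h2
  have h3 : X.ell (X.Kdiv - A) ≤ X.ell (X.Kdiv - (A - Finsupp.single P 1)) := by
    apply X.ell_mono
    intro T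
    have := single_nonneg' P (m := 1) (by norm_num) T
    simp only [Finsupp.sub_apply]; linarith
  omega

lemma sub_single_le (P : Place) (A : Place →₀ ℤ) : A - Finsupp.single P 1 ≤ A := by
  intro T
  have := single_nonneg' P (m := 1) (by norm_num) T
  simp only [Finsupp.sub_apply]; linarith

lemma mem_RR_sub_single {T : Place} {A : Place →₀ ℤ} {f : F} (hf : f ∈ X.RR A) (h0 : f ≠ 0)
    (hv : X.v T f ≠ -A T) : f ∈ X.RR (A - Finsupp.single T 1) := by
  rw [X.mem_RR_ne h0] at hf ⊢
  intro R
  have h1 := hf R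
  rw [Finsupp.sub_apply, Finsupp.single_apply]
  split_ifs with h
  · subst h; omega
  · simpa using h1

lemma v_of_mem_RR_sub_single {T : Place} {A : Place →₀ ℤ} {f : F} (h0 : f ≠ 0)
    (hf : f ∈ X.RR (A - Finsupp.single T 1)) : -A T + 1 ≤ X.v T f := by
  rw [X.mem_RR_ne h0] at hf
  have := hf T
  rw [Finsupp.sub_apply, Finsupp.single_eq_same] at this
  linarith

/-! ### Clifford's inequality via valuations at a rational place -/

/-- At a rational place `P`, the nonzero elements of `L(A)` take (at least) `ℓ(A)` values. -/
lemma exists_valuations {P : Place} (hP : X.IsRational P) (d : ℕ) :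
    ∀ A : Place →₀ ℤ, X.divDeg A < d →
      ∃ S : Finset ℤ, S.card = X.ell A ∧ ∀ s ∈ S, ∃ f ∈ X.RR A, f ≠ 0 ∧ X.v P f = s := by
  induction d with
  | zero =>
    intro A hA
    exact ⟨∅, by rw [X.ell_eq_zero (by simpa using hA)]; rfl, by simp⟩
  | succ d ih =>
    intro A hA
    obtain ⟨S, hS, hSf⟩ := ih (A - Finsupp.single P 1) (by
      rw [divDeg_sub, X.divDeg_single_rat hP]; push_cast at hA; linarith)
    have hsub := X.RR_mono (sub_single_le P A)
    have hle := X.ell_le_sub_single_add_one hP A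
    have hge := X.ell_le_of_RR_le hsub
    by_cases heq : X.ell A = X.ell (A - Finsupp.single P 1)
    · refine ⟨S, by rw [hS, heq], fun s hs => ?_⟩
      obtain ⟨f, hf, h⟩ := hSf s hs
      exact ⟨f, hsub hf, h⟩
    · have hnot : ¬ X.RR A ≤ X.RR (A - Finsupp.single P 1) := by
        intro hcon
        exact heq (le_antisymm (X.ell_le_of_RR_le hcon) hge)
      obtain ⟨f, hfA, hfn⟩ := Set.not_subset.1 hnot
      have hf0 : f ≠ 0 := by rintro rfl; exact hfn (zero_mem _)
      have hv : X.v P f = -A P := by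
        by_contra hcon
        exact hfn (X.mem_RR_sub_single hfA hf0 hcon)
      refine ⟨insert (-A P) S, ?_, ?_⟩
      · rw [Finset.card_insert_of_notMem, hS]
        · omega
        · intro hmem
          obtain ⟨h, hh, hh0, hhv⟩ := hSf _ hmem
          have := X.v_of_mem_RR_sub_single hh0 hh
          omega
      · intro s hs
        rcases Finset.mem_insert.1 hs with rfl | hs
        · exact ⟨f, hfA, hf0, hv⟩
        · obtain ⟨h, hh, h'⟩ := hSf s hs
          exact ⟨h, hsub hh, h'⟩

/-- The nonzero elements of `L(A)` take at most `ℓ(A)` values at a rational place. -/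
lemma card_valuations_le {P : Place} (hP : X.IsRational P) (d : ℕ) :
    ∀ (A : Place →₀ ℤ) (S : Finset ℤ), X.divDeg A < d →
      (∀ s ∈ S, ∃ f ∈ X.RR A, f ≠ 0 ∧ X.v P f = s) → S.card ≤ X.ell A := by
  induction d with
  | zero =>
    intro A S hA hS
    rcases S.eq_empty_or_nonempty with rfl | ⟨s, hs⟩
    · simp
    · obtain ⟨f, hf, hf0, -⟩ := hS s hs
      exact absurd (X.eq_zero_of_divDeg_neg (by simpa using hA) hf) hf0
  | succ d ih =>
    intro A S hA hS
    have hd : X.divDeg (A - Finsupp.single P 1) < d := by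
      rw [divDeg_sub, X.divDeg_single_rat hP]; push_cast at hA; linarith
    have hsub := X.RR_mono (sub_single_le P A)
    have h1 : (S.erase (-A P)).card ≤ X.ell (A - Finsupp.single P 1) := by
      refine ih _ _ hd fun s hs => ?_
      obtain ⟨hs1, hs2⟩ := Finset.mem_erase.1 hs
      obtain ⟨f, hf, hf0, hv⟩ := hS s hs2
      exact ⟨f, X.mem_RR_sub_single hf hf0 (by rw [hv]; exact hs1), hf0, hv⟩
    by_cases hmem : -A P ∈ S
    · obtain ⟨f, hf, hf0, hv⟩ := hS _ hmem
      have hlt : X.RR (A - Finsupp.single P 1) < X.RR A := by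
        refine lt_of_le_of_ne hsub fun h => ?_
        rw [← h] at hf
        have := X.v_of_mem_RR_sub_single hf0 hf
        omega
      have := X.rr_findim A
      have h2 : X.ell (A - Finsupp.single P 1) < X.ell A := Submodule.finrank_lt_finrank_of_lt hlt
      rw [Finset.card_erase_of_mem hmem] at h1
      omega
    · rw [Finset.erase_eq_of_notMem hmem] at h1
      exact h1.trans (X.ell_le_of_RR_le hsub)

/-- `ℓ(A) + ℓ(B) ≤ 1 + ℓ(A + B)` when both spaces are nonzero: valuations at `P` add under
multiplication, and `|S + T| ≥ |S| + |T| - 1` for finite sets of integers. -/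
lemma ell_add_ell_le {P : Place} (hP : X.IsRational P) {A B : Place →₀ ℤ}
    (hA : 0 < X.ell A) (hB : 0 < X.ell B) : X.ell A + X.ell B ≤ X.ell (A + B) + 1 := by
  have key : ∀ C : Place →₀ ℤ, X.divDeg C < ((X.divDeg C).toNat + 1 : ℕ) := by
    intro C; push_cast; have := Int.self_le_toNat (X.divDeg C); linarith
  obtain ⟨S, hS, hSf⟩ := X.exists_valuations hP _ A (key A)
  obtain ⟨T, hT, hTf⟩ := X.exists_valuations hP _ B (key B)
  have hcard : (Finset.image₂ (· + ·) S T).card ≤ X.ell (A + B) := by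
    refine X.card_valuations_le hP _ (A + B) _ (key _) fun s hs => ?_
    obtain ⟨a, ha, b, hb, rfl⟩ := Finset.mem_image₂.1 hs
    obtain ⟨f, hf, hf0, hfv⟩ := hSf a ha
    obtain ⟨h, hh, hh0, hhv⟩ := hTf b hb
    exact ⟨f * h, X.mul_mem_RR hf hh, mul_ne_zero hf0 hh0, by rw [X.v_mul P f h hf0 hh0, hfv, hhv]⟩
  have hSn : S.Nonempty := Finset.card_pos.1 (hS ▸ hA)
  have hTn : T.Nonempty := Finset.card_pos.1 (hT ▸ hB)
  have hCD : S.card + T.card - 1 ≤ (Finset.image₂ (· + ·) S T).card :=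
    cauchy_davenport_add_of_linearOrder_isCancelAdd hSn hTn
  omega

lemma ell_le_one_of_divDeg_eq_zero {P : Place} (hP : X.IsRational P) {A : Place →₀ ℤ}
    (h : X.divDeg A = 0) : X.ell A ≤ 1 := by
  have h1 := X.ell_le_sub_single_add_one hP A
  rw [X.ell_eq_zero (A := A - Finsupp.single P 1)
    (by rw [divDeg_sub, X.divDeg_single_rat hP]; linarith)] at h1
  exact h1

variable {X}

/-- A divisor of degree `2g - 2` with `ℓ = g` is equivalent to the given canonical divisor, hence
satisfies the Riemann-Roch theorem in its place. -/
lemma IsCanonical.RRFor {W : Place →₀ ℤ} (h : X.IsCanonical W) : X.RRFor W := by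
  obtain ⟨hd, hl⟩ := h
  have h1 := X.RRFor_Kdiv W
  rw [hd, hl] at h1
  obtain ⟨f, hf, hf0⟩ := X.exists_ne_zero_of_ell_pos (A := X.Kdiv - W) (by omega)
  obtain ⟨B, hB, hBd⟩ := X.divDeg_eq_sum (A := X.Kdiv - W) hf0
  rw [X.mem_RR_ne hf0] at hf
  rw [divDeg_sub, X.RRFor_Kdiv.divDeg_eq, hd, sub_self] at hBd
  have hB0 : ∀ T, B T = 0 := by
    intro T
    unfold divDeg Finsupp.sum at hBd
    rw [Finset.sum_eq_zero_iff_of_nonneg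
      (fun T _ => mul_nonneg (by rw [hB]; exact hf T) (by positivity))] at hBd
    by_contra hne
    have := hBd T (Finsupp.mem_support_iff.2 hne)
    have hp := X.degP_pos T
    rcases mul_eq_zero.1 this with h | h
    · exact hne h
    · simp at h; omega
  intro A
  rw [X.RRFor_Kdiv A]
  congr 2
  have hv : ∀ T, X.v T f = W T - X.Kdiv T := by
    intro T
    have := hB T
    rw [hB0, Finsupp.sub_apply] at this
    linarith
  apply le_antisymm
  · refine X.ell_le_of_mul (inv_ne_zero hf0) (X.mul_mem_RR_of_divisor_le (inv_ne_zero hf0) fun T => ?_)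
    rw [X.v_inv T hf0, hv]; simp
  · refine X.ell_le_of_mul hf0 (X.mul_mem_RR_of_divisor_le hf0 fun T => ?_)
    rw [hv]; simp

variable (X)

/-! ### Evaluation codes -/

section Codes

variable {n : ℕ} {PP : Fin n → Place}

/-- `f` has no pole at `T`, in the form used by the laws for evaluation. -/
def Regular (T : Place) (f : F) : Prop := f = 0 ∨ 0 ≤ X.v T f

/-- The scaling factors `τ` match the coefficients of `G` at the places `PP j`, so that `z ↦ τ j * z`
turns `L(G)` into functions regular at `PP j`. -/
def Adapted (PP : Fin n → Place) (τ : Fin n → F) (G : Place →₀ ℤ) : Prop :=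
  ∀ j, τ j ≠ 0 ∧ X.v (PP j) (τ j) = G (PP j)

variable {X}

lemma Adapted.regular {τ : Fin n → F} {G : Place →₀ ℤ} (hτ : X.Adapted PP τ G) {z : F}
    (hz : z ∈ X.RR G) (j : Fin n) : X.Regular (PP j) (τ j * z) := by
  by_cases h0 : z = 0
  · left; rw [h0, mul_zero]
  right
  rw [X.mem_RR_ne h0] at hz
  rw [X.v_mul _ _ _ (hτ j).1 h0, (hτ j).2]
  have := hz (PP j)
  linarith

lemma adapted_one {G : Place →₀ ℤ} (hG : ∀ j, G (PP j) = 0) : X.Adapted PP (fun _ => 1) G :=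
  fun j => ⟨one_ne_zero, by rw [X.v_one, hG j]⟩

lemma regular_of_mem {A : Place →₀ ℤ} (hA : ∀ j, A (PP j) = 0) {z : F} (hz : z ∈ X.RR A)
    (j : Fin n) : X.Regular (PP j) z := by
  simpa using (adapted_one hA).regular hz j

lemma regular_algebraMap (T : Place) (c : Fq) : X.Regular T (algebraMap Fq F c) := by
  by_cases h : c = 0
  · left; rw [h, map_zero]
  · right; rw [X.v_algebraMap T c h]

lemma ev_zero (T : Place) : X.ev T 0 = 0 := by
  have := X.ev_algebraMap T 0
  rwa [map_zero] at this

/-- Evaluation on `L(G)` at the places `PP j`, after multiplication by the local factors `τ j`. For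
`τ = 1` this is the usual evaluation map; general `τ` allow `G` to have the `PP j` in its support. -/
def evL (hPP : ∀ j, X.IsRational (PP j)) {τ : Fin n → F} {G : Place →₀ ℤ}
    (hτ : X.Adapted PP τ G) : X.RR G →ₗ[Fq] (Fin n → Fq) where
  toFun z := fun j => X.ev (PP j) (τ j * z)
  map_add' z w := by
    funext j
    simp only [Submodule.coe_add, mul_add, Pi.add_apply]
    exact X.ev_add _ _ _ (hPP j) (hτ.regular z.2 j) (hτ.regular w.2 j)
  map_smul' c z := by
    funext j
    simp only [Submodule.coe_smul, Pi.smul_apply, RingHom.id_apply, smul_eq_mul]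
    rw [Algebra.smul_def, mul_left_comm,
      X.ev_mul _ _ _ (hPP j) (regular_algebraMap _ c) (hτ.regular z.2 j), X.ev_algebraMap]

lemma evL_apply (hPP : ∀ j, X.IsRational (PP j)) {τ : Fin n → F} {G : Place →₀ ℤ}
    (hτ : X.Adapted PP τ G) (z : X.RR G) (j : Fin n) :
    evL hPP hτ z j = X.ev (PP j) (τ j * z) := rfl

lemma ev_eq_zero_iff_one_le (hPP : ∀ j, X.IsRational (PP j)) {τ : Fin n → F} {G : Place →₀ ℤ}
    (hτ : X.Adapted PP τ G) {z : F} (hz : z ∈ X.RR G) (h0 : z ≠ 0) (j : Fin n) :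
    X.ev (PP j) (τ j * z) = 0 ↔ 1 ≤ X.v (PP j) z + G (PP j) := by
  have hne := mul_ne_zero (hτ j).1 h0
  have hr := (hτ.regular hz j).resolve_left hne
  rw [X.ev_eq_zero_iff _ _ (hPP j) hne hr, X.v_mul _ _ _ (hτ j).1 h0, (hτ j).2, add_comm]

/-- `L(G - D)` is the kernel of evaluation on `L(G)`. -/
lemma mem_RR_sub_Ddiv (hPP : ∀ j, X.IsRational (PP j)) (hinj : Function.Injective PP)
    {τ : Fin n → F} {G : Place →₀ ℤ} (hτ : X.Adapted PP τ G) {z : F} (hz : z ∈ X.RR G) :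
    (∀ j, X.ev (PP j) (τ j * z) = 0) ↔ z ∈ X.RR (G - Ddiv PP) := by
  by_cases h0 : z = 0
  · subst h0
    simp [ev_zero]
  simp only [ev_eq_zero_iff_one_le hPP hτ hz h0]
  have hz' := (X.mem_RR_ne h0).1 hz
  rw [X.mem_RR_ne h0]
  constructor
  · intro h T
    rw [Finsupp.sub_apply]
    by_cases hT : ∃ j, PP j = T
    · obtain ⟨j, rfl⟩ := hT
      rw [Ddiv_apply_self hinj]
      have := h j
      linarith
    · push Not at hT
      rw [Ddiv_apply_of_ne hT]
      have := hz' T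
      linarith
  · intro h j
    have := h (PP j)
    rw [Finsupp.sub_apply, Ddiv_apply_self hinj] at this
    linarith

lemma finrank_range_evL (hPP : ∀ j, X.IsRational (PP j)) (hinj : Function.Injective PP)
    {τ : Fin n → F} {G : Place →₀ ℤ} (hτ : X.Adapted PP τ G) :
    Module.finrank Fq (LinearMap.range (evL hPP hτ)) + X.ell (G - Ddiv PP) = X.ell G := by
  have := X.rr_findim G
  have h1 := LinearMap.finrank_range_add_finrank_ker (evL hPP hτ)
  have hle : X.RR (G - Ddiv PP) ≤ X.RR G := by
    apply X.RR_mono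
    intro T
    have h : 0 ≤ Ddiv PP T := by
      unfold Ddiv
      rw [Finsupp.finsetSum_apply]
      exact Finset.sum_nonneg fun j _ => single_nonneg' _ (by norm_num) T
    rw [Finsupp.sub_apply]; linarith
  have hker : LinearMap.ker (evL hPP hτ) = (X.RR (G - Ddiv PP)).comap (X.RR G).subtype := by
    ext z
    rw [LinearMap.mem_ker, Submodule.mem_comap, Submodule.subtype_apply,
      ← mem_RR_sub_Ddiv hPP hinj hτ z.2, funext_iff]
    rfl
  have h2 : Module.finrank Fq (LinearMap.ker (evL hPP hτ)) = X.ell (G - Ddiv PP) := by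
    rw [hker]
    exact (Submodule.comapSubtypeEquivOfLe hle).finrank_eq
  rw [← h2, h1]; rfl

/-- The code `C_L(D, A)` as a linear subspace, for `A` avoiding the evaluation places. -/
def codeL (hPP : ∀ j, X.IsRational (PP j)) {A : Place →₀ ℤ} (hA : ∀ j, A (PP j) = 0) :
    Submodule Fq (Fin n → Fq) :=
  LinearMap.range (evL hPP (adapted_one hA))

lemma coe_codeL (hPP : ∀ j, X.IsRational (PP j)) {A : Place →₀ ℤ} (hA : ∀ j, A (PP j) = 0) :
    (codeL hPP hA : Set (Fin n → Fq)) = X.code PP A := by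
  ext w
  constructor
  · rintro ⟨z, rfl⟩
    exact ⟨z, z.2, fun j => by rw [evL_apply, one_mul]⟩
  · rintro ⟨z, hz, hw⟩
    exact ⟨⟨z, hz⟩, funext fun j => by rw [evL_apply, one_mul, hw]⟩

lemma codeL_mono (hPP : ∀ j, X.IsRational (PP j)) {A B : Place →₀ ℤ} (hA : ∀ j, A (PP j) = 0)
    (hB : ∀ j, B (PP j) = 0) (h : A ≤ B) : codeL (X := X) hPP hA ≤ codeL hPP hB := by
  rintro w ⟨z, rfl⟩
  exact ⟨⟨z, X.RR_mono h z.2⟩, rfl⟩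

lemma finrank_codeL (hPP : ∀ j, X.IsRational (PP j)) (hinj : Function.Injective PP)
    {A : Place →₀ ℤ} (hA : ∀ j, A (PP j) = 0) :
    Module.finrank Fq (codeL (X := X) hPP hA) + X.ell (A - Ddiv PP) = X.ell A :=
  finrank_range_evL hPP hinj _

/-! ### Duality -/

/-- If `W` is canonical, the code of `W + D` is a hyperplane whose normal vector has no zero
coordinate. (Classically, this vector consists of the residues of a differential.) -/
lemma exists_residue_vector (hPP : ∀ j, X.IsRational (PP j)) (hinj : Function.Injective PP)
    (hn : 0 < n) {W : Place →₀ ℤ} (hW : X.RRFor W) {τ : Fin n → F}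
    (hτ : X.Adapted PP τ (W + Ddiv PP)) :
    ∃ y : Fin n → Fq, (∀ j, y j ≠ 0) ∧
      ∀ z ∈ X.RR (W + Ddiv PP), ∑ j, y j * X.ev (PP j) (τ j * z) = 0 := by
  have hdim := finrank_range_evL hPP hinj hτ
  rw [add_sub_cancel_right, hW.ell_eq] at hdim
  have hbig := X.ell_of_large (A := W + Ddiv PP)
    (by rw [divDeg_add, hW.divDeg_eq, X.divDeg_Ddiv hPP]; omega)
  rw [divDeg_add, hW.divDeg_eq, X.divDeg_Ddiv hPP] at hbig
  set C := LinearMap.range (evL hPP hτ) with hC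
  have hCn : Module.finrank Fq C + 1 = n := by omega
  have hlt : C < ⊤ := by
    rw [lt_top_iff_ne_top]
    intro h
    rw [h, finrank_top, Module.finrank_fin_fun] at hCn
    omega
  obtain ⟨l, hl, hCl⟩ := Submodule.exists_le_ker_of_lt_top C hlt
  have hker : C = LinearMap.ker l := by
    apply Submodule.eq_of_le_of_finrank_le hCl
    have h1 : LinearMap.ker l ≠ ⊤ := fun h => hl (LinearMap.ker_eq_top.1 h)
    have h2 := Submodule.finrank_lt h1
    rw [Module.finrank_fin_fun] at h2
    omega
  have hly : ∀ c : Fin n → Fq, l c = ∑ j, l (Pi.single j 1) * c j := by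
    intro c
    conv_lhs => rw [pi_eq_sum_univ' c]
    rw [map_sum]
    refine Finset.sum_congr rfl fun j _ => ?_
    rw [map_smul, smul_eq_mul, mul_comm]
  refine ⟨fun j => l (Pi.single j 1), fun j hj => ?_, fun z hz => ?_⟩
    -- If coordinate `j` were zero, the unit vector at `j` would be the evaluation of some `z`; but
    -- then `z` lies in `L(W + P_j) = L(W)`, so that its evaluation vanishes.
  · have hmem : (Pi.single j 1 : Fin n → Fq) ∈ C := by rw [hker]; exact hj
    obtain ⟨⟨z, hz⟩, hzj⟩ := hmem
    have hev : ∀ i, X.ev (PP i) (τ i * z) = (Pi.single j 1 : Fin n → Fq) i := fun i => by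
      rw [← hzj]; rfl
    have hz0 : z ≠ 0 := by
      rintro rfl
      have := hev j
      rw [mul_zero, ev_zero, Pi.single_eq_same] at this
      exact zero_ne_one this
    have hzW : z ∈ X.RR (W + Finsupp.single (PP j) 1) := by
      have hz' := (X.mem_RR_ne hz0).1 hz
      rw [X.mem_RR_ne hz0]
      intro T
      have hT' := hz' T
      rw [Finsupp.add_apply] at hT' ⊢
      by_cases hT : ∃ i, PP i = T
      · obtain ⟨i, rfl⟩ := hT
        by_cases hij : i = j
        · subst hij
          rw [Ddiv_apply_self hinj] at hT'
          rw [Finsupp.single_eq_same]; exact hT'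
        · have h1 := hev i
          rw [Pi.single_eq_of_ne hij, ev_eq_zero_iff_one_le hPP hτ hz hz0, Finsupp.add_apply,
            Ddiv_apply_self hinj] at h1
          rw [Finsupp.single_eq_of_ne (fun h => hij (hinj h))]
          linarith
      · push Not at hT
        rw [Ddiv_apply_of_ne hT] at hT'
        rw [Finsupp.single_eq_of_ne (hT j).symm]; exact hT'
    have hell : X.ell (W + Finsupp.single (PP j) 1) ≤ X.ell W := by
      have h1 := X.ell_of_large (A := W + Finsupp.single (PP j) 1)
        (by rw [divDeg_add, hW.divDeg_eq, X.divDeg_single_rat (hPP j)]; omega)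
      rw [divDeg_add, hW.divDeg_eq, X.divDeg_single_rat (hPP j)] at h1
      rw [hW.ell_eq]; omega
    have hle : X.RR W ≤ X.RR (W + Finsupp.single (PP j) 1) := by
      apply X.RR_mono
      intro T
      have := single_nonneg' (PP j) (m := 1) (by norm_num) T
      rw [Finsupp.add_apply]; linarith
    have := X.rr_findim (W + Finsupp.single (PP j) 1)
    have heq := Submodule.eq_of_le_of_finrank_le hle hell
    rw [← heq] at hzW
    have hvan := (mem_RR_sub_Ddiv hPP hinj hτ hz).2 (by rwa [add_sub_cancel_right]) j
    rw [hev j, Pi.single_eq_same] at hvan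
    exact one_ne_zero hvan
  · have h1 : evL hPP hτ ⟨z, hz⟩ ∈ LinearMap.ker l := hCl ⟨_, rfl⟩
    rw [LinearMap.mem_ker, hly] at h1
    exact h1

/-- The `y`-weighted inner product on `Fq^n`. -/
def wform (y : Fin n → Fq) : LinearMap.BilinForm Fq (Fin n → Fq) :=
  LinearMap.mk₂ Fq (fun c d => ∑ j, y j * c j * d j)
    (fun a b c => by rw [← Finset.sum_add_distrib]; exact Finset.sum_congr rfl fun j _ => by simp; ring)
    (fun a b c => by rw [smul_eq_mul, Finset.mul_sum]; exact Finset.sum_congr rfl fun j _ => by simp; ring)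
    (fun a b c => by rw [← Finset.sum_add_distrib]; exact Finset.sum_congr rfl fun j _ => by simp; ring)
    (fun a b c => by rw [smul_eq_mul, Finset.mul_sum]; exact Finset.sum_congr rfl fun j _ => by simp; ring)

lemma wform_apply (y c d : Fin n → Fq) : wform y c d = ∑ j, y j * c j * d j := rfl

lemma finrank_wform_orthogonal {y : Fin n → Fq} (hy : ∀ j, y j ≠ 0)
    (C : Submodule Fq (Fin n → Fq)) :
    Module.finrank Fq C + Module.finrank Fq ((wform y).orthogonal C) = n := by
  have h := LinearMap.BilinForm.finrank_add_finrank_orthogonal' (B := wform y) C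
  have hk : (wform y).ker = ⊥ := by
    rw [eq_bot_iff]
    intro c hc
    rw [Submodule.mem_bot]
    funext j
    have h1 : wform y c (Pi.single j 1) = 0 := by
      rw [LinearMap.mem_ker] at hc; rw [hc]; rfl
    rw [wform_apply, Finset.sum_eq_single j] at h1
    · rw [Pi.single_eq_same, mul_one] at h1
      exact (mul_eq_zero.1 h1).resolve_left (hy j)
    · intro i _ hij; rw [Pi.single_eq_of_ne hij, mul_zero]
    · simp
  rw [hk, inf_bot_eq, finrank_bot, add_zero, Module.finrank_fin_fun] at h
  exact h

/-- The duality theorem: with `y` as in `exists_residue_vector`, the (locally scaled) code of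
`W + D - A` is the orthogonal of `C_L(D, A)` for the `y`-weighted inner product. The inclusion is the
orthogonality of `y` to products; equality follows from the dimension count by Riemann-Roch. -/
lemma range_evL_eq_orthogonal (hPP : ∀ j, X.IsRational (PP j)) (hinj : Function.Injective PP)
    {W : Place →₀ ℤ} (hW : X.RRFor W) {τ : Fin n → F} {y : Fin n → Fq} (hy : ∀ j, y j ≠ 0)
    (hyo : ∀ z ∈ X.RR (W + Ddiv PP), ∑ j, y j * X.ev (PP j) (τ j * z) = 0)
    {A : Place →₀ ℤ} (hA : ∀ j, A (PP j) = 0) (hτ : X.Adapted PP τ (W + Ddiv PP - A)) :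
    LinearMap.range (evL hPP hτ) = (wform y).orthogonal (codeL (X := X) hPP hA) := by
  apply Submodule.eq_of_le_of_finrank_le
  · rintro _ ⟨w, rfl⟩ _ ⟨z, rfl⟩
    change wform y _ _ = 0
    have hm := X.mul_mem_RR z.2 w.2
    rw [add_sub_cancel] at hm
    rw [← hyo _ hm, wform_apply]
    refine Finset.sum_congr rfl fun j _ => ?_
    rw [evL_apply, evL_apply, one_mul, mul_left_comm,
      X.ev_mul _ _ _ (hPP j) (regular_of_mem hA z.2 j) (hτ.regular w.2 j), mul_assoc]
  · have h1 := finrank_wform_orthogonal hy (codeL (X := X) hPP hA)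
    have h2 := finrank_codeL (X := X) hPP hinj hA
    have h3 := finrank_range_evL hPP hinj hτ
    have h4 := hW A
    have h5 := hW (A - Ddiv PP)
    rw [divDeg_sub, X.divDeg_Ddiv hPP] at h5
    have e1 : W + Ddiv PP - A - Ddiv PP = W - A := by abel
    have e2 : W - (A - Ddiv PP) = W + Ddiv PP - A := by abel
    rw [e1] at h3
    rw [e2] at h5
    omega

end Codes

/-! ### The flag of codes `C_L(D, qP + G)` -/

section Flag

variable {n : ℕ} {PP : Fin n → Place}

/-- The divisor `qP + G`. -/
abbrev lineDiv (P : Place) (G : Place →₀ ℤ) (q : ℤ) : Place →₀ ℤ := Finsupp.single P q + G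

lemma lineDiv_apply {P : Place} {G : Place →₀ ℤ} (hPPP : ∀ j, PP j ≠ P) (hG : ∀ j, G (PP j) = 0)
    (q : ℤ) (j : Fin n) : lineDiv P G q (PP j) = 0 := by
  rw [lineDiv, Finsupp.add_apply, hG, Finsupp.single_eq_of_ne (hPPP j), add_zero]

lemma lineDiv_mono (P : Place) (G : Place →₀ ℤ) {p q : ℤ} (h : p ≤ q) :
    lineDiv P G p ≤ lineDiv P G q := by
  intro T
  simp only [lineDiv, Finsupp.add_apply, Finsupp.single_apply]
  split_ifs <;> linarith

variable {X}

lemma range_evL_congr (hPP : ∀ j, X.IsRational (PP j)) {τ : Fin n → F} {A B : Place →₀ ℤ}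
    (h : A = B) (hA : X.Adapted PP τ A) (hB : X.Adapted PP τ B) :
    LinearMap.range (evL hPP hA) = LinearMap.range (evL hPP hB) := by
  subst h; rfl

lemma divDeg_lineDiv {P : Place} (hP : X.IsRational P) (G : Place →₀ ℤ) (q : ℤ) :
    X.divDeg (lineDiv P G q) = q + X.divDeg G := by
  rw [divDeg_add, X.divDeg_single_rat hP]

lemma finrank_codeL_le_succ {P : Place} (hP : X.IsRational P) (hPP : ∀ j, X.IsRational (PP j))
    (hinj : Function.Injective PP) {G : Place →₀ ℤ} (hA : ∀ q j, lineDiv P G q (PP j) = 0) (q : ℤ) :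
    Module.finrank Fq (codeL (X := X) hPP (hA q))
      ≤ Module.finrank Fq (codeL (X := X) hPP (hA (q - 1))) + 1 := by
  have h1 := finrank_codeL (X := X) hPP hinj (hA q)
  have h2 := finrank_codeL (X := X) hPP hinj (hA (q - 1))
  have h3 := X.ell_le_sub_single_add_one hP (lineDiv P G q)
  have e : lineDiv P G q - Finsupp.single P 1 = lineDiv P G (q - 1) := by
    rw [lineDiv, lineDiv, Finsupp.single_sub]; abel
  rw [e] at h3
  have h4 : X.ell (lineDiv P G (q - 1) - Ddiv PP) ≤ X.ell (lineDiv P G q - Ddiv PP) :=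
    X.ell_mono (sub_le_sub_right (lineDiv_mono P G (by linarith)) _)
  omega

/-- If `a 1 < ⋯ < a n` are the jumps of the flag and `a 0 < a 1`, then the code at `a i` has
dimension `i`, and smaller codes in the flag have dimension less than `i`. -/
lemma finrank_flag {P : Place} (hP : X.IsRational P) (hPP : ∀ j, X.IsRational (PP j))
    (hinj : Function.Injective PP) {G : Place →₀ ℤ} (hA : ∀ q j, lineDiv P G q (PP j) = 0)
    (a : Fin (n + 1) → ℤ) (ha_mono : StrictMono a)
    (ha_mem : ∀ i : Fin (n + 1), i ≠ 0 →
      X.code PP (lineDiv P G (a i)) ≠ X.code PP (lineDiv P G (a i - 1)))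
    (ha_all : ∀ b, X.code PP (lineDiv P G b) ≠ X.code PP (lineDiv P G (b - 1)) →
      ∃ i : Fin (n + 1), i ≠ 0 ∧ b = a i) :
    (∀ i : Fin (n + 1), Module.finrank Fq (codeL (X := X) hPP (hA (a i))) = i) ∧
      ∀ i : Fin (n + 1), i ≠ 0 → ∀ q < a i,
        Module.finrank Fq (codeL (X := X) hPP (hA q)) < i := by
  have hcode : ∀ p q, X.code PP (lineDiv P G p) = X.code PP (lineDiv P G q) ↔
      codeL (X := X) hPP (hA p) = codeL (X := X) hPP (hA q) := by
    intro p q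
    rw [← coe_codeL hPP (hA p), ← coe_codeL hPP (hA q)]
    exact SetLike.coe_set_eq
  have hmono : ∀ p q, p ≤ q → codeL (X := X) hPP (hA p) ≤ codeL hPP (hA q) := fun p q h =>
    codeL_mono hPP _ _ (lineDiv_mono P G h)
  have hconst : ∀ p q, p ≤ q → (∀ r, p < r → r ≤ q → ∀ i : Fin (n + 1), i ≠ 0 → r ≠ a i) →
      codeL (X := X) hPP (hA q) = codeL (X := X) hPP (hA p) := by
    intro p q hpq
    induction q, hpq using Int.leInduction with
    | base => intro _; rfl
    | succ q hq ih =>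
      intro h
      rw [← ih (fun r h1 h2 => h r h1 (by linarith))]
      by_contra hne
      obtain ⟨i, hi, hi'⟩ := ha_all (q + 1) (by
        rw [Ne, hcode, add_sub_cancel_right]; exact hne)
      exact h (q + 1) (by linarith) le_rfl i hi hi'
  have hjump : ∀ i : Fin (n + 1), i ≠ 0 →
      codeL (X := X) hPP (hA (a i - 1)) < codeL (X := X) hPP (hA (a i)) := by
    intro i hi
    refine lt_of_le_of_ne (hmono _ _ (by linarith)) fun h => ?_
    exact ha_mem i hi ((hcode _ _).2 h.symm)
  have hdim : ∀ (k : ℕ) (hk : k < n + 1),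
      Module.finrank Fq (codeL (X := X) hPP (hA (a ⟨k, hk⟩))) = k := by
    intro k
    induction k with
    | zero =>
      intro hk
      have h0 : (⟨0, hk⟩ : Fin (n + 1)) = 0 := rfl
      rw [h0, hconst (min (a 0) (-X.divDeg G - 1)) (a 0) (min_le_left _ _)]
      · have h1 := finrank_codeL (X := X) hPP hinj (hA (min (a 0) (-X.divDeg G - 1)))
        rw [X.ell_eq_zero (A := lineDiv P G _)] at h1
        · omega
        · rw [divDeg_lineDiv hP]
          have := min_le_right (a 0) (-X.divDeg G - 1)
          linarith
      · intro r _ hr i hi hri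
        have := ha_mono (Fin.pos_iff_ne_zero.2 hi)
        omega
    | succ k ih =>
      intro hk
      have h1 := ih (by omega)
      have hne : (⟨k + 1, hk⟩ : Fin (n + 1)) ≠ 0 := by
        intro h; have := congrArg Fin.val h; simp at this
      have h2 := Submodule.finrank_lt_finrank_of_lt (hjump ⟨k + 1, hk⟩ hne)
      have h3 := finrank_codeL_le_succ (X := X) hP hPP hinj hA (a ⟨k + 1, hk⟩)
      have hlt : a ⟨k, by omega⟩ < a ⟨k + 1, hk⟩ := ha_mono (by simp)
      have hc := hconst (a ⟨k, by omega⟩) (a ⟨k + 1, hk⟩ - 1) (by omega) (by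
        intro r hr1 hr2 i _ hri
        subst hri
        have h4 := ha_mono.lt_iff_lt.1 hr1
        have h5 : i < ⟨k + 1, hk⟩ := ha_mono.lt_iff_lt.1 (by linarith)
        rw [Fin.lt_def] at h4 h5
        simp at h4 h5
        omega)
      rw [hc] at h2 h3
      omega
  refine ⟨fun i => hdim i.1 i.2, fun i hi q hq => ?_⟩
  have h1 := Submodule.finrank_lt_finrank_of_lt (hjump i hi)
  have h2 := Submodule.finrank_mono (hmono q (a i - 1) (by omega))
  have h3 := hdim i.1 i.2
  simp only [Fin.eta] at h3
  omega

/-- If `E` is canonical, the duality theorem for `E` identifies the `y`-orthogonal of the code at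
`a (n - k)` with the code at `N - a (n - k)`, which has dimension `k`. -/
lemma flag_dual_of_canonical {P : Place} (hPP : ∀ j, X.IsRational (PP j))
    (hinj : Function.Injective PP) (hn0 : 0 < n) {G : Place →₀ ℤ}
    (hA : ∀ q j, lineDiv P G q (PP j) = 0)
    (a : ℕ → ℤ) (hdim : ∀ k ≤ n, Module.finrank Fq (codeL (X := X) hPP (hA (a k))) = k)
    {N : ℤ} (hE : X.RRFor (Finsupp.single P N + (2 : ℤ) • G - Ddiv PP)) :
    ∃ y : Fin n → Fq, (∀ j, y j ≠ 0) ∧ ∀ k ≤ n,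
      codeL (X := X) hPP (hA (a k)) = (wform y).orthogonal (codeL (X := X) hPP (hA (a (n - k)))) := by
  set E := Finsupp.single P N + (2 : ℤ) • G - Ddiv PP with hEdef
  have hED : ∀ q, E + Ddiv PP - lineDiv P G q = lineDiv P G (N - q) := by
    intro q
    rw [hEdef, lineDiv, lineDiv, Finsupp.single_sub, two_smul]; abel
  have hEDq : E + Ddiv PP = lineDiv P G N + lineDiv P G 0 := by
    rw [hEdef, lineDiv, lineDiv, Finsupp.single_zero, two_smul]; abel
  have hτ : X.Adapted PP (fun _ => 1) (E + Ddiv PP) := adapted_one fun j => by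
    rw [hEDq, Finsupp.add_apply, hA, hA, add_zero]
  obtain ⟨y, hy, hyo⟩ := exists_residue_vector hPP hinj hn0 hE hτ
  refine ⟨y, hy, fun k hk => ?_⟩
  have hτ' : X.Adapted PP (fun _ => 1) (E + Ddiv PP - lineDiv P G (a (n - k))) :=
    adapted_one fun j => by rw [hED, hA]
  have h1 := range_evL_eq_orthogonal hPP hinj hE hy hyo (hA (a (n - k))) hτ'
  have h2 : LinearMap.range (evL hPP hτ') = codeL (X := X) hPP (hA (N - a (n - k))) :=
    range_evL_congr hPP (hED _) _ _
  rw [← h1, h2]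
  have h3 := finrank_wform_orthogonal hy (codeL (X := X) hPP (hA (a (n - k))))
  rw [← h1, h2, hdim _ (by omega)] at h3
  have h4 := hdim k hk
  rcases le_total (a k) (N - a (n - k)) with h | h
  · exact Submodule.eq_of_le_of_finrank_le (codeL_mono hPP _ _ (lineDiv_mono P G h)) (by omega)
  · exact (Submodule.eq_of_le_of_finrank_le (codeL_mono hPP _ _ (lineDiv_mono P G h))
      (by omega)).symm

/-- Clifford's bound in the form used below. -/
lemma ell_Kdiv_add_single_lt {P : Place} (hP : X.IsRational P) {m : ℤ} {i : ℕ} (hi : 1 ≤ i)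
    (hig : i ≤ X.genus) (hm : m ≤ 2 * i - 1 - 2 * X.genus) :
    X.ell (X.Kdiv + Finsupp.single P m) < i := by
  by_contra hcon
  push Not at hcon
  have hone : 0 < X.ell (Finsupp.single P (-m)) :=
    X.ell_pos_of_mem (X.one_mem_RR (single_nonneg' P (by omega))) one_ne_zero
  have h1 := X.ell_add_ell_le hP (A := X.Kdiv + Finsupp.single P m) (by omega) hone
  have e1 : X.Kdiv + Finsupp.single P m + Finsupp.single P (-m) = X.Kdiv := by
    rw [Finsupp.single_neg]; abel
  rw [e1, X.RRFor_Kdiv.ell_eq] at h1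
  have h2 := X.RRFor_Kdiv (Finsupp.single P (-m))
  have e2 : X.Kdiv - Finsupp.single P (-m) = X.Kdiv + Finsupp.single P m := by
    rw [Finsupp.single_neg]; abel
  rw [e2, X.divDeg_single_rat hP] at h2
  omega

/-- A divisor of degree at most `2g` with `ℓ ≥ g + 1` is base point free. -/
lemma exists_v_eq_neg {P : Place} (hP : X.IsRational P) {B : Place →₀ ℤ}
    (hd : X.divDeg B ≤ 2 * X.genus) (hl : X.genus + 1 ≤ X.ell B) (T : Place) :
    ∃ w ∈ X.RR B, w ≠ 0 ∧ X.v T w = -B T := by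
  by_contra hcon
  push Not at hcon
  have hle : X.RR B ≤ X.RR (B - Finsupp.single T 1) := by
    intro w hw
    by_cases h0 : w = 0
    · rw [h0]; exact zero_mem _
    exact X.mem_RR_sub_single hw h0 (hcon w hw h0)
  have h1 := X.ell_le_of_RR_le hle
  have h2 := X.ell_le_of_divDeg_le hP (A := B - Finsupp.single T 1) (by
    have := X.degP_pos T
    rw [divDeg_sub, divDeg_single]
    omega)
  omega

/-- If the flag is self-dual up to the weight `y`, then `E` is canonical. With `K` a canonical
divisor, `B k = K + D - A (n - k)` and `A k = a_k P + G`, duality yields for each `w ∈ L(B k)` a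
partner `f ∈ L(A k)` whose evaluation is that of `w` times a fixed vector. Partners satisfy
`f = θ w` with one and the same `θ` for all `w ∈ L(B (g + 1))`; this is proved by induction on `k`, as
otherwise `f - θ w` would embed `L(B k)` into a space that is too small by Clifford's inequality.
Since `B (g + 1)` is base point free, `θ` maps `L(K)` into `L(E)`. -/
lemma canonical_of_flag_dual {P : Place} (hP : X.IsRational P) (hPP : ∀ j, X.IsRational (PP j))
    (hinj : Function.Injective PP) (hPPP : ∀ j, PP j ≠ P) {G : Place →₀ ℤ}
    (hA : ∀ q j, lineDiv P G q (PP j) = 0) (hn : 2 * X.genus + 2 ≤ n)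
    (a : ℕ → ℤ) (hdim : ∀ k ≤ n, Module.finrank Fq (codeL (X := X) hPP (hA (a k))) = k)
    (hlow : ∀ k, 1 ≤ k → k ≤ n → ∀ q < a k,
      Module.finrank Fq (codeL (X := X) hPP (hA q)) < k)
    (y : Fin n → Fq) (hy : ∀ j, y j ≠ 0)
    (hdual : ∀ k ≤ n,
      codeL (X := X) hPP (hA (a k))
        = (wform y).orthogonal (codeL (X := X) hPP (hA (a (n - k))))) :
    X.IsCanonical (Finsupp.single P ((n : ℤ) + 2 * X.genus - 2 - 2 * X.divDeg G)
      + (2 : ℤ) • G - Ddiv PP) := by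
  have hD := X.divDeg_Ddiv hPP
  have hKd := X.RRFor_Kdiv.divDeg_eq
  -- Bounds on the jumps near both ends of the flag.
  have hb1 : ∀ k, 1 ≤ k → k ≤ X.genus + 1 → a k + X.divDeg G ≤ k + X.genus - 1 := by
    intro k hk1 hk2
    by_contra hcon
    have h1 := hlow k hk1 (by omega) (k + X.genus - 1 - X.divDeg G) (by omega)
    have h2 := finrank_codeL (X := X) hPP hinj (hA (k + X.genus - 1 - X.divDeg G))
    have h3 := X.ell_ge (lineDiv P G (k + X.genus - 1 - X.divDeg G))
    rw [X.ell_eq_zero (A := lineDiv P G _ - Ddiv PP)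
      (by rw [divDeg_sub, hD, divDeg_lineDiv hP]; omega)] at h2
    rw [divDeg_lineDiv hP] at h3
    omega
  have hb2 : ∀ k, k ≤ X.genus + 1 → (n : ℤ) + X.genus - 1 - k ≤ a (n - k) + X.divDeg G := by
    intro k hk
    by_contra hcon
    have h1 := hdim (n - k) (by omega)
    have h2 := finrank_codeL (X := X) hPP hinj (hA (a (n - k)))
    have h3 := X.ell_mono (lineDiv_mono P G
      (show a (n - k) ≤ n + X.genus - 2 - k - X.divDeg G by omega))
    have h4 := X.ell_of_large (A := lineDiv P G (n + X.genus - 2 - k - X.divDeg G))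
      (by rw [divDeg_lineDiv hP]; omega)
    rw [divDeg_lineDiv hP] at h4
    omega
  choose τ hτ0 hτv using fun j => X.exists_v_eq (PP j) (X.Kdiv (PP j) + 1)
  have hτ : ∀ M : Place →₀ ℤ, (∀ j, M (PP j) = 0) →
      X.Adapted PP τ (X.Kdiv + Ddiv PP + M) := by
    intro M hM j
    refine ⟨hτ0 j, ?_⟩
    rw [hτv, Finsupp.add_apply, Finsupp.add_apply, hM, Ddiv_apply_self hinj, add_zero]
  obtain ⟨y', hy', hyo⟩ := exists_residue_vector hPP hinj (by omega) X.RRFor_Kdiv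
    (τ := τ) (by simpa using hτ 0 (fun j => rfl))
  set B : ℕ → Place →₀ ℤ := fun k => X.Kdiv + Ddiv PP - lineDiv P G (a (n - k)) with hB
  have hτB : ∀ k, X.Adapted PP τ (B k) := by
    intro k
    have := hτ (-lineDiv P G (a (n - k))) (fun j => by rw [Finsupp.neg_apply, hA, neg_zero])
    rwa [← sub_eq_add_neg] at this
  have hBdual : ∀ k, LinearMap.range (evL hPP (hτB k))
      = (wform y').orthogonal (codeL (X := X) hPP (hA (a (n - k)))) := fun k =>
    range_evL_eq_orthogonal hPP hinj X.RRFor_Kdiv hy' hyo (hA (a (n - k))) (hτB k)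
  have hBdeg : ∀ k, X.divDeg (B k) = 2 * X.genus - 2 + n - a (n - k) - X.divDeg G := by
    intro k
    rw [hB]
    simp only
    rw [divDeg_sub, divDeg_add, hD, hKd, divDeg_lineDiv hP]; ring
  have hBell : ∀ k ≤ n, k ≤ X.ell (B k) := by
    intro k hk
    have h1 := finrank_wform_orthogonal hy' (codeL (X := X) hPP (hA (a (n - k))))
    rw [← hBdual, hdim _ (by omega)] at h1
    have h2 := finrank_range_evL hPP hinj (hτB k)
    omega
  -- `f ∈ L(A k)` is the partner of `w ∈ L(B k)`.
  let Pr : ℕ → F → F → Prop := fun k w f => w ∈ X.RR (B k) ∧ f ∈ X.RR (lineDiv P G (a k)) ∧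
    ∀ j, y j * X.ev (PP j) f = y' j * X.ev (PP j) (τ j * w)
  have hPr : ∀ k ≤ n, ∀ w ∈ X.RR (B k), ∃ f, Pr k w f := by
    intro k hk w hw
    have h1 : evL hPP (hτB k) ⟨w, hw⟩ ∈ (wform y').orthogonal
        (codeL (X := X) hPP (hA (a (n - k)))) := by
      rw [← hBdual]; exact ⟨_, rfl⟩
    have h2 : (fun j => (y j)⁻¹ * (y' j * X.ev (PP j) (τ j * w))) ∈
        codeL (X := X) hPP (hA (a k)) := by
      rw [hdual k hk]
      intro c hc
      have h3 := h1 c hc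
      change wform y' _ _ = 0 at h3
      change wform y _ _ = 0
      rw [← h3, wform_apply, wform_apply]
      refine Finset.sum_congr rfl fun j _ => ?_
      have := hy j
      rw [evL_apply]
      field_simp
    obtain ⟨f, hf⟩ := h2
    refine ⟨f, hw, f.2, fun j => ?_⟩
    have h3 := congrFun hf j
    rw [evL_apply, one_mul] at h3
    rw [h3, mul_inv_cancel_left₀ (hy j)]
  have hcross : ∀ k l, 1 ≤ k → k ≤ X.genus + 1 → 1 ≤ l → l ≤ X.genus + 1 → ∀ w f w' f',
      Pr k w f → Pr l w' f' →
      w' * f - w * f' ∈ X.RR (X.Kdiv + Finsupp.single P ((k : ℤ) + l - n)) := by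
    rintro k l hk1 hk2 hl1 hl2 w f w' f' ⟨hw, hf, hwf⟩ ⟨hw', hf', hwf'⟩
    set m : ℤ := (k : ℤ) + l - n with hm
    have hgen : ∀ k l, 1 ≤ k → k ≤ X.genus + 1 → l ≤ X.genus + 1 → (k : ℤ) + l - n = m →
        ∀ w f, f ∈ X.RR (lineDiv P G (a k)) → w ∈ X.RR (B l) →
        w * f ∈ X.RR (X.Kdiv + Ddiv PP + Finsupp.single P m) := by
      intro k l hk1 hk2 hl2 hkl w f hf hw
      refine X.RR_mono ?_ (X.mul_mem_RR hw hf)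
      have e : B l + lineDiv P G (a k)
          = X.Kdiv + Ddiv PP + Finsupp.single P (a k - a (n - l)) := by
        rw [hB]
        simp only [lineDiv, Finsupp.single_sub]; abel
      rw [e]
      refine add_le_add le_rfl ?_
      rw [Finsupp.single_le_single]
      have := hb1 k hk1 hk2
      have := hb2 l hl2
      omega
    have hz1 := hgen k l hk1 hk2 hl2 rfl w' f hf hw'
    have hz2 := hgen l k hl1 hl2 hk2 (by omega) w f' hf' hw
    have hτm := hτ (Finsupp.single P m) (fun j => Finsupp.single_eq_of_ne (hPPP j))
    have hz := sub_mem hz1 hz2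
    have hvan := (mem_RR_sub_Ddiv hPP hinj hτm hz).1 (fun j => by
      have h1 := congrFun ((evL hPP hτm).map_sub ⟨_, hz1⟩ ⟨_, hz2⟩) j
      rw [evL_apply, Pi.sub_apply, evL_apply, evL_apply] at h1
      change X.ev (PP j) (τ j * (w' * f - w * f')) = X.ev (PP j) (τ j * (w' * f))
        - X.ev (PP j) (τ j * (w * f')) at h1
      rw [h1, ← mul_assoc, ← mul_assoc,
        X.ev_mul _ _ _ (hPP j) ((hτB l).regular hw' j) (regular_of_mem (hA _) hf j),
        X.ev_mul _ _ _ (hPP j) ((hτB k).regular hw j) (regular_of_mem (hA _) hf' j)]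
      apply mul_left_cancel₀ (hy j)
      have h2 := hwf j
      have h3 := hwf' j
      linear_combination X.ev (PP j) (τ j * w') * h2 - X.ev (PP j) (τ j * w) * h3)
    have e : X.Kdiv + Ddiv PP + Finsupp.single P m - Ddiv PP = X.Kdiv + Finsupp.single P m := by
      abel
    rwa [e] at hvan
  have hθ : ∀ k, 1 ≤ k → k ≤ X.genus + 1 → ∃ θ : F, ∀ w f, Pr k w f → f = θ * w := by
    intro k hk1
    induction k, hk1 using Nat.le_induction with
    | base =>
      intro hk
      obtain ⟨w₁, hw₁, hw₁0⟩ := X.exists_ne_zero_of_ell_pos (A := B 1) (hBell 1 (by omega))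
      obtain ⟨f₁, hf₁⟩ := hPr 1 (by omega) w₁ hw₁
      refine ⟨f₁ / w₁, fun w f hwf => ?_⟩
      have h1 := hcross 1 1 le_rfl hk le_rfl hk w f w₁ f₁ hwf hf₁
      have h2 := X.eq_zero_of_divDeg_neg (by
        rw [divDeg_add, hKd, X.divDeg_single_rat hP]; push_cast; omega) h1
      field_simp
      linear_combination h2
    | succ k hk1 ih =>
      intro hk
      obtain ⟨θ, hθ⟩ := ih (by omega)
      refine ⟨θ, fun w f hwf => ?_⟩
      by_contra hne
      have h1 : X.ell (B k) ≤ X.ell (X.Kdiv + Finsupp.single P (((k + 1 : ℕ) : ℤ) + k - n)) := by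
        refine X.ell_le_of_mul (sub_ne_zero.2 hne) fun z hz => ?_
        obtain ⟨f', hf'⟩ := hPr k (by omega) z hz
        have h2 := hcross (k + 1) k (by omega) hk hk1 (by omega) w f z f' hwf hf'
        rw [hθ z f' hf'] at h2
        have e : (f - θ * w) * z = z * f - w * (θ * z) := by ring
        rwa [e]
      have h2 := ell_Kdiv_add_single_lt (X := X) hP (m := ((k + 1 : ℕ) : ℤ) + k - n) hk1
        (by omega) (by push_cast; omega)
      have h3 := hBell k (by omega)
      omega
  obtain ⟨θ, hθ⟩ := hθ (X.genus + 1) (by omega) le_rfl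
  have hBl := hBell (X.genus + 1) (by omega)
  have hBd := hBdeg (X.genus + 1)
  have hb1' := hb1 (X.genus + 1) (by omega) le_rfl
  have hb2' := hb2 (X.genus + 1) le_rfl
  push_cast at hb1' hb2'
  have hBd2 : X.divDeg (B (X.genus + 1)) ≤ 2 * X.genus := by omega
  have hBd3 : 2 * (X.genus : ℤ) ≤ X.divDeg (B (X.genus + 1)) := by
    by_contra hcon
    have := X.ell_le_of_divDeg_le hP (A := B (X.genus + 1)) (by omega)
    omega
  have hθ0 : θ ≠ 0 := by
    rintro rfl
    obtain ⟨w, hw, hw0⟩ := X.exists_ne_zero_of_ell_pos (A := B (X.genus + 1)) (by omega)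
    obtain ⟨f, hf⟩ := hPr (X.genus + 1) (by omega) w hw
    have hf0 := hθ w f hf
    rw [zero_mul] at hf0
    subst hf0
    have h1 := (mem_RR_sub_Ddiv hPP hinj (hτB (X.genus + 1)) hw).1 (fun j => by
      have h2 := hf.2.2 j
      rw [ev_zero, mul_zero] at h2
      exact (mul_eq_zero.1 h2.symm).resolve_left (hy' j))
    exact hw0 (X.eq_zero_of_divDeg_neg (by rw [divDeg_sub, hD]; omega) h1)
  set E := Finsupp.single P ((n : ℤ) + 2 * X.genus - 2 - 2 * X.divDeg G)
      + (2 : ℤ) • G - Ddiv PP with hE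
  have hEd : X.divDeg E = 2 * X.genus - 2 := by
    rw [hE, divDeg_sub, divDeg_add, X.divDeg_single_rat hP, two_smul, divDeg_add, hD]; ring
  have hθv : ∀ T, 0 ≤ X.v T θ + E T - X.Kdiv T := by
    intro T
    obtain ⟨w, hw, hw0, hwv⟩ := exists_v_eq_neg hP hBd2 hBl T
    obtain ⟨f, hf⟩ := hPr (X.genus + 1) (by omega) w hw
    have hfm := hf.2.1
    rw [hθ w f hf, X.mem_RR_ne (mul_ne_zero hθ0 hw0)] at hfm
    have h1 := hfm T
    rw [X.v_mul T _ _ hθ0 hw0, hwv] at h1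
    have h2 : lineDiv P G (a (X.genus + 1)) T - B (X.genus + 1) T ≤ E T - X.Kdiv T := by
      have h3 : Finsupp.single P (a (X.genus + 1)) T + Finsupp.single P (a (n - (X.genus + 1))) T
          ≤ Finsupp.single P ((n : ℤ) + 2 * X.genus - 2 - 2 * X.divDeg G) T := by
        simp only [Finsupp.single_apply]
        split_ifs
        · omega
        · simp
      rw [hE, hB]
      simp only [lineDiv, Finsupp.sub_apply, Finsupp.add_apply, Finsupp.smul_apply, smul_eq_mul]
      linarith
    linarith
  refine ⟨hEd, le_antisymm ?_ ?_⟩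
  · have h1 := X.RRFor_Kdiv E
    have h2 := X.ell_le_one_of_divDeg_eq_zero hP (A := X.Kdiv - E) (by rw [divDeg_sub, hKd, hEd]; ring)
    rw [hEd] at h1
    omega
  · rw [← X.RRFor_Kdiv.ell_eq]
    exact X.ell_le_of_mul hθ0 (X.mul_mem_RR_of_divisor_le hθ0 hθv)

end Flag

end AGCodes.Data

/-- For nowhere zero `x`, the relation `C = x · C'^⊥` says that `C` is the orthogonal of `C'` for the
inner product weighted by `x⁻¹`. -/
lemma AGCodes.eq_scaleCode_dualCode_iff {Fq : Type*} [Field Fq] [Fintype Fq] {n : ℕ}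
    {x : Fin n → Fq} (hx : ∀ j, x j ≠ 0) (C C' : Submodule Fq (Fin n → Fq)) :
    (C : Set (Fin n → Fq)) = scaleCode x (dualCode (C' : Set (Fin n → Fq))) ↔
      C = (Data.wform fun j => (x j)⁻¹).orthogonal C' := by
  have h : scaleCode x (dualCode (C' : Set (Fin n → Fq)))
      = ((Data.wform fun j => (x j)⁻¹).orthogonal C' : Submodule Fq (Fin n → Fq)) := by
    ext d
    constructor
    · rintro ⟨e, he, rfl⟩ c hc
      change Data.wform _ _ _ = 0
      rw [Data.wform_apply, ← he c hc]
      refine Finset.sum_congr rfl fun j _ => ?_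
      have := hx j
      field_simp
    · intro hd
      refine ⟨fun j => (x j)⁻¹ * d j, fun c hc => ?_, ?_⟩
      · have h1 : Data.wform (fun j => (x j)⁻¹) c d = 0 := hd c hc
        rw [← h1, Data.wform_apply]
        refine Finset.sum_congr rfl fun j _ => ?_
        ring
      · funext j
        exact mul_inv_cancel_left₀ (hx j) _
  rw [h]
  exact SetLike.coe_set_eq

theorem stmt10 {Fq F Place : Type*} [Field Fq] [Fintype Fq] [Field F] [Algebra Fq F]
    (X : Data Fq F Place) (P : Place) {t : ℕ} (Q : Fin t → Place) (β : Fin t → ℤ)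
    (hPrat : X.IsRational P) (hQrat : ∀ i, X.IsRational (Q i))
    (hQinj : Function.Injective Q) (hPQ : ∀ i, Q i ≠ P)
    (hβ : 0 ≤ ∑ i, β i)
    {n : ℕ} (PP : Fin n → Place) (hPPrat : ∀ j, X.IsRational (PP j))
    (hPPinj : Function.Injective PP)
    (hPPP : ∀ j, PP j ≠ P) (hPPQ : ∀ j i, PP j ≠ Q i)
    (hn : 2 * (X.genus : ℤ) + 2 * (∑ i, β i) + 2 ≤ n)
    (a : Fin (n + 1) → ℤ) (ha_mono : StrictMono a) (ha₀ : a 0 = a 1 - 1)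
    (ha_mem : ∀ i : Fin (n + 1), i ≠ 0 → a i ∈ X.HhatS PP P Q β)
    (ha_all : ∀ b ∈ X.HhatS PP P Q β, ∃ i : Fin (n + 1), i ≠ 0 ∧ b = a i) :
    (∃ x : Fin n → Fq, IsIsometryDualFlag
        (fun i : Fin (n + 1) => X.code PP (Finsupp.single P (a i) + Gdiv Q β)) x)
      ↔ X.IsCanonical
          (Finsupp.single P ((n : ℤ) + 2 * X.genus - 2 - 2 * ∑ i, β i)
            + (2 : ℤ) • Gdiv Q β - Ddiv PP) := by
  have hG : ∀ j, Gdiv Q β (PP j) = 0 := fun j => Data.Gdiv_apply_of_ne (hPPQ j)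
  have hA : ∀ q j, Data.lineDiv P (Gdiv Q β) q (PP j) = 0 := Data.lineDiv_apply hPPP hG
  have hGd : X.divDeg (Gdiv Q β) = ∑ i, β i := X.divDeg_Gdiv hQrat β
  obtain ⟨hdim, hlow⟩ := Data.finrank_flag hPrat hPPrat hPPinj hA a ha_mono ha_mem ha_all
  -- The jumps as a sequence indexed by natural numbers; only the values at `k ≤ n` matter.
  set aN : ℕ → ℤ := fun k => a (Fin.ofNat (n + 1) k) with haN
  have hval : ∀ k ≤ n, (Fin.ofNat (n + 1) k).val = k := fun k hk =>
    Nat.mod_eq_of_lt (by omega)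
  have haN_eq : ∀ i : Fin (n + 1), aN i = a i := fun i => by
    rw [haN]
    simp only
    congr 1
    exact Fin.ext (hval i (by omega))
  have haN_rev : ∀ i : Fin (n + 1), aN (n - i) = a (Fin.rev i) := fun i => by
    rw [← haN_eq, Fin.val_rev]
    congr 1
    omega
  have hdim' : ∀ k ≤ n, Module.finrank Fq (Data.codeL (X := X) hPPrat (hA (aN k))) = k :=
    fun k hk => by rw [hdim, hval k hk]
  have hlow' : ∀ k, 1 ≤ k → k ≤ n → ∀ q < aN k,
      Module.finrank Fq (Data.codeL (X := X) hPPrat (hA q)) < k := by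
    intro k hk1 hk q hq
    have := hlow _ (fun h => by
      have h1 := congrArg Fin.val h
      rw [hval k hk] at h1
      simp at h1
      omega) q hq
    rwa [hval k hk] at this
  have hflag : ∀ x : Fin n → Fq, (∀ j, x j ≠ 0) → (IsIsometryDualFlag
      (fun i : Fin (n + 1) => X.code PP (Finsupp.single P (a i) + Gdiv Q β)) x ↔
      ∀ k ≤ n, Data.codeL (X := X) hPPrat (hA (aN k)) = (Data.wform fun j => (x j)⁻¹).orthogonal
        (Data.codeL (X := X) hPPrat (hA (aN (n - k))))) := by
    intro x hx
    have key : ∀ i : Fin (n + 1),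
        (X.code PP (Finsupp.single P (a i) + Gdiv Q β)
          = scaleCode x (dualCode (X.code PP (Finsupp.single P (a (Fin.rev i)) + Gdiv Q β)))) ↔
        Data.codeL (X := X) hPPrat (hA (aN i)) = (Data.wform fun j => (x j)⁻¹).orthogonal
          (Data.codeL (X := X) hPPrat (hA (aN (n - i)))) := by
      intro i
      rw [← eq_scaleCode_dualCode_iff hx, Data.coe_codeL, Data.coe_codeL, haN_eq, haN_rev]
    constructor
    · rintro ⟨-, h⟩ k hk
      have := (key ⟨k, by omega⟩).1 (h _)
      exact this
    · intro h
      exact ⟨hx, fun i => (key i).2 (h i (by omega))⟩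
  constructor
  · rintro ⟨x, hx⟩
    have h := Data.canonical_of_flag_dual hPrat hPPrat hPPinj hPPP hA (by omega) aN hdim' hlow'
      (fun j => (x j)⁻¹) (fun j => inv_ne_zero (hx.1 j)) ((hflag x hx.1).1 hx)
    rwa [hGd] at h
  · intro hE
    obtain ⟨y, hy, h⟩ := Data.flag_dual_of_canonical hPPrat hPPinj (by omega) hA aN hdim' hE.RRFor
    refine ⟨fun j => (y j)⁻¹, (hflag _ fun j => inv_ne_zero (hy j)).2 ?_⟩
    simpa only [inv_inv] using h
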